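/- arXiv:2101.00868 — 2 statements merged into one kernel-verified Lean document; each statement's English description precedes it below -/
import Mathlib

section
/- Let q ≥ 2 and π be a permutation of {0,…,q−1}. Then 0 is not a periodic point of the rotated odometer F_π, and for every non-periodic point x ∈ [0,1) the closure in [0,1) of the forward orbit {F_π^n(0) : n ≥ 0} is contained in the closure in [0,1) of the forward orbit {F_π^n(x) : n ≥ 0}. (This expresses that the aperiodic subsystem (I_np, F_π) has a unique minimal subsystem, and that this minimal subsystem contains 0.) -/
open Classical in
/-- The von Neumann–Kakutani map `a : [0,1) → [0,1)`:
for `x ∈ [1 - 2^{1-n}, 1 - 2^{-n})`, `n ≥ 1`, `a x = x - 1 + 2^{1-n} + 2^{-n} = x - 1 + 3·2^{-n}`.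
Here `Nat.find h` is the least `n` with `x < 1 - 2^{-n}`, which for `x ∈ [0,1)` is exactly
the unique `n ≥ 1` with `1 - 2^{1-n} ≤ x < 1 - 2^{-n}`. -/
noncomputable def vnk (x : ℝ) : ℝ :=
  if h : ∃ n : ℕ, x < 1 - (2 : ℝ)⁻¹ ^ n then
    x - 1 + 3 * (2 : ℝ)⁻¹ ^ (Nat.find h)
  else 0

open Classical in
/-- The finite interval exchange `R_π : [0,1) → [0,1)` determined by a permutation `π` of
`{0,…,q-1}`: `R_π x = x + (π i - i)/q` for `x ∈ [i/q, (i+1)/q)`. -/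
noncomputable def rotPerm (q : ℕ) (π : Equiv.Perm (Fin q)) (x : ℝ) : ℝ :=
  if h : ∃ i : Fin q, x ∈ Set.Ico (((i : ℕ) : ℝ) / q) ((((i : ℕ) : ℝ) + 1) / q) then
    x + ((((π h.choose : Fin q) : ℕ) : ℝ) - (((h.choose : Fin q) : ℕ) : ℝ)) / q
  else x

/-- The rotated odometer `F_π = a ∘ R_π`. -/
noncomputable def rotOdo (q : ℕ) (π : Equiv.Perm (Fin q)) (x : ℝ) : ℝ :=
  vnk (rotPerm q π x)

/-!
Both `vnk` and `rotPerm q π` translate each interval `[a, b)` of a partition of `[0, 1)`, with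
pairwise disjoint images, so `F = rotOdo q π` is injective and each iterate of `F` is continuous
from the right. If an orbit stays above `2⁻ᴺ`, it uses only the first `N` intervals of `vnk`, whose
translation lengths are multiples of `2⁻ᴺ`; hence it moves within a coset of `(q 2ᴺ)⁻¹ ℤ`, is
finite, and is periodic by injectivity. So every non-periodic orbit accumulates at `0` from the
right, and right continuity at `0` carries this to every point `Fⁿ 0`. Finally `F > 0` on `[0, 1)`,
so `0` never returns to itself.
-/

open Set Filter Function
open scoped Topology Pointwise

section Orbits

variable {α : Type*} {f : α → α} {s t : Set α} {a x : α}

/-- The forward orbit `{x, f x, f (f x), …}` of `x` under `f`. -/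
def forwardOrbit (f : α → α) (x : α) : Set α :=
  {y | ∃ n : ℕ, y = f^[n] x}

lemma mapsTo_forwardOrbit : MapsTo f (forwardOrbit f x) (forwardOrbit f x) := by
  rintro _ ⟨n, rfl⟩
  exact ⟨n + 1, (iterate_succ_apply' f n x).symm⟩

lemma forwardOrbit_subset (hf : MapsTo f s s) (hx : x ∈ s) : forwardOrbit f x ⊆ s := by
  rintro _ ⟨n, rfl⟩
  exact hf.iterate n hx

lemma mem_of_mem_periodicPts (hf : MapsTo f s t) (hts : t ⊆ s) (hx : x ∈ s)
    (hper : x ∈ periodicPts f) : x ∈ t := by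
  obtain ⟨n, hn, hfix⟩ := hper
  obtain ⟨k, rfl⟩ := Nat.exists_eq_add_of_lt hn
  have hreturn : f (f^[k] x) = x := by
    rw [← iterate_succ_apply' f k x]
    simpa only [zero_add] using hfix.eq
  exact hreturn ▸ hf ((hf.mono_right hts).iterate k hx)

lemma mem_periodicPts_of_finite_forwardOrbit (hinj : InjOn f s) (hf : MapsTo f s s) (hx : x ∈ s)
    (hfin : (forwardOrbit f x).Finite) : x ∈ periodicPts f := by
  have hmem (n : ℕ) : f^[n] x ∈ forwardOrbit f x := ⟨n, rfl⟩
  obtain ⟨m, n, hmn, heq⟩ := Set.Finite.exists_lt_map_eq_of_forall_mem hmem hfin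
  refine mk_mem_periodicPts (Nat.sub_pos_of_lt hmn)
    (hinj.iterate hf m (hf.iterate (n - m) hx) hx ?_)
  rw [← iterate_add_apply, Nat.add_sub_cancel' hmn.le]
  exact heq.symm

lemma finite_forwardOrbit_of_sub_mem {E : Type*} [NormedAddCommGroup E] [ProperSpace E]
    {f : E → E} {x : E} (H : AddSubgroup E) [DiscreteTopology H]
    (hbdd : Bornology.IsBounded (forwardOrbit f x))
    (hsub : ∀ y ∈ forwardOrbit f x, f y - y ∈ H) : (forwardOrbit f x).Finite := by
  have hcoset : ∀ y ∈ forwardOrbit f x, y - x ∈ H := by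
    rintro _ ⟨n, rfl⟩
    induction n with
    | zero => simp
    | succ n ih =>
      rw [iterate_succ_apply', ← sub_add_sub_cancel _ (f^[n] x)]
      exact H.add_mem (hsub _ ⟨n, rfl⟩) ih
  have hfin : ((forwardOrbit f x - {x}) ∩ (H : Set E)).Finite :=
    Metric.finite_isBounded_inter_isClosed DiscreteTopology.isDiscrete
      (hbdd.sub Bornology.isBounded_singleton) H.isClosed_of_discrete
  exact (hfin.preimage (f := (· - x)) sub_left_injective.injOn).subset
    fun y hy ↦ ⟨sub_mem_sub hy rfl, hcoset y hy⟩

lemma closure_forwardOrbit_subset [TopologicalSpace α]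
    (hcont : ∀ n, ContinuousWithinAt f^[n] s a) (hs : forwardOrbit f x ⊆ s)
    (ha : a ∈ closure (forwardOrbit f x)) :
    closure (forwardOrbit f a) ⊆ closure (forwardOrbit f x) := by
  refine closure_minimal ?_ isClosed_closure
  rintro _ ⟨n, rfl⟩
  exact ((hcont n).mono hs).mem_closure ha (mapsTo_forwardOrbit.iterate n)

lemma tendsto_iterate_nhdsGE [TopologicalSpace α] [Preorder α]
    (hlim : ∀ y ∈ s, Tendsto f (𝓝[≥] y) (𝓝[≥] (f y))) (hf : MapsTo f s s) (hx : x ∈ s) (n : ℕ) :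
    Tendsto f^[n] (𝓝[≥] x) (𝓝[≥] (f^[n] x)) := by
  induction n with
  | zero => exact tendsto_id
  | succ n ih =>
    rw [iterate_succ']
    exact (hlim _ (hf.iterate n hx)).comp ih

end Orbits

section PiecewiseTranslations

lemma injOn_iUnion_of_pairwise_disjoint {ι α β : Type*} {f : α → β} {P : ι → Set α}
    {Q : ι → Set β} (hinj : ∀ i, InjOn f (P i)) (hf : ∀ i, MapsTo f (P i) (Q i))
    (hQ : Pairwise (Disjoint on Q)) : InjOn f (⋃ i, P i) := by
  intro x hx y hy hxy
  obtain ⟨i, hxi⟩ := mem_iUnion.1 hx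
  obtain ⟨j, hyj⟩ := mem_iUnion.1 hy
  obtain rfl : i = j := hQ.eq (not_disjoint_iff.2 ⟨f x, hf i hxi, hxy ▸ hf j hyj⟩)
  exact hinj i hxi hyj hxy

variable {α : Type*} {f : α → α} {s : Set α} {a b c x : α}

lemma injOn_of_eqOn_add_const [Add α] [IsRightCancelAdd α] (hf : EqOn f (· + c) s) : InjOn f s :=
  (add_left_injective c).injOn.congr hf.symm

lemma mapsTo_Ico_of_eqOn_add_const [AddCommGroup α] [PartialOrder α] [IsOrderedAddMonoid α]
    (hf : EqOn f (· + c) (Ico a b)) :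
    MapsTo f (Ico a b) (Ico (a + c) (b + c)) := by
  intro x hx
  rw [hf hx]
  exact ⟨add_le_add_left hx.1 c, add_lt_add_left hx.2 c⟩

lemma tendsto_nhdsGE_of_eqOn_add_const [AddCommGroup α] [LinearOrder α] [IsOrderedAddMonoid α]
    [TopologicalSpace α] [OrderTopology α] (hf : EqOn f (· + c) (Ico a b)) (hx : x ∈ Ico a b) :
    Tendsto f (𝓝[≥] x) (𝓝[≥] (f x)) := by
  have htranslate : Tendsto (· + c) (𝓝[≥] x) (𝓝[≥] (x + c)) :=
    (continuous_add_const c).continuousWithinAt.tendsto_nhdsWithin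
      fun _ hy ↦ add_le_add_left (mem_Ici.1 hy) c
  rw [hf hx]
  exact htranslate.congr' (hf.symm.eventuallyEq_of_mem (Ico_mem_nhdsGE_of_mem hx))

end PiecewiseTranslations

section VonNeumannKakutani

/-- The `m`-th interval of continuity `[1 - 2⁻ᵐ, 1 - 2⁻⁽ᵐ⁺¹⁾)` of `vnk`, corresponding to
`n = m + 1` in the definition of `vnk`. -/
def vnkCell (m : ℕ) : Set ℝ :=
  Ico (1 - 2⁻¹ ^ m) (1 - 2⁻¹ ^ (m + 1))

lemma antitone_two_inv_pow : Antitone fun m : ℕ ↦ (2⁻¹ : ℝ) ^ m :=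
  pow_right_anti₀ (by norm_num) (by norm_num)

lemma iUnion_vnkCell : ⋃ m, vnkCell m = Ico 0 1 := by
  ext x
  rw [mem_iUnion]
  constructor
  · rintro ⟨m, hle, hlt⟩
    have hpow : (2⁻¹ : ℝ) ^ m ≤ 1 := pow_le_one₀ (by norm_num) (by norm_num)
    have hpos : (0 : ℝ) < 2⁻¹ ^ (m + 1) := by positivity
    constructor <;> linarith
  · rintro ⟨h0, h1⟩
    obtain ⟨m, hlt, hle⟩ := exists_nat_pow_near_of_lt_one (sub_pos.2 h1) (sub_le_self 1 h0)
      (y := (2⁻¹ : ℝ)) (by norm_num) (by norm_num)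
    exact ⟨m, sub_le_comm.1 hle, lt_sub_comm.1 hlt⟩

lemma vnk_eqOn_vnkCell (m : ℕ) : EqOn vnk (· + (3 * 2⁻¹ ^ (m + 1) - 1)) (vnkCell m) := by
  classical
  rintro x ⟨hle, hlt⟩
  have hex : ∃ n : ℕ, x < 1 - (2 : ℝ)⁻¹ ^ n := ⟨m + 1, hlt⟩
  have hfind : Nat.find hex = m + 1 := by
    refine (Nat.find_eq_iff hex).2 ⟨hlt, fun n hn ↦ not_lt.2 ?_⟩
    exact (sub_le_sub_left (antitone_two_inv_pow (Nat.le_of_lt_succ hn)) 1).trans hle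
  have hval : vnk x = x - 1 + 3 * 2⁻¹ ^ (m + 1) := by
    rw [vnk, dif_pos hex, ← hfind]
  rw [hval]
  ring

lemma vnk_mapsTo_vnkCell (m : ℕ) : MapsTo vnk (vnkCell m) (Ico (2⁻¹ ^ (m + 1)) (2⁻¹ ^ m)) := by
  have hmaps := mapsTo_Ico_of_eqOn_add_const (vnk_eqOn_vnkCell m)
  have hleft : 1 - (2⁻¹ : ℝ) ^ m + (3 * 2⁻¹ ^ (m + 1) - 1) = 2⁻¹ ^ (m + 1) := by ring
  have hright : 1 - (2⁻¹ : ℝ) ^ (m + 1) + (3 * 2⁻¹ ^ (m + 1) - 1) = 2⁻¹ ^ m := by ring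
  rwa [hleft, hright] at hmaps

lemma vnk_mapsTo : MapsTo vnk (Ico 0 1) (Ioo 0 1) := by
  rw [← iUnion_vnkCell]
  refine mapsTo_iUnion.2 fun m ↦ (vnk_mapsTo_vnkCell m).mono_right fun y hy ↦ ?_
  have hpow : (2⁻¹ : ℝ) ^ m ≤ 1 := pow_le_one₀ (by norm_num) (by norm_num)
  exact ⟨lt_of_lt_of_le (by positivity) hy.1, hy.2.trans_le hpow⟩

lemma vnk_injOn : InjOn vnk (Ico 0 1) := by
  rw [← iUnion_vnkCell]
  exact injOn_iUnion_of_pairwise_disjoint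
    (fun m ↦ injOn_of_eqOn_add_const (vnk_eqOn_vnkCell m)) vnk_mapsTo_vnkCell
    antitone_two_inv_pow.pairwise_disjoint_on_Ico_succ

lemma vnk_tendsto_nhdsGE {x : ℝ} (hx : x ∈ Ico 0 1) :
    Tendsto vnk (𝓝[≥] x) (𝓝[≥] (vnk x)) := by
  rw [← iUnion_vnkCell, mem_iUnion] at hx
  obtain ⟨m, hm⟩ := hx
  exact tendsto_nhdsGE_of_eqOn_add_const (vnk_eqOn_vnkCell m) hm

lemma vnk_sub_self_mem_zmultiples {x : ℝ} (hx : x ∈ Ico 0 1) {N : ℕ} (hN : 2⁻¹ ^ N ≤ vnk x) :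
    vnk x - x ∈ AddSubgroup.zmultiples ((2⁻¹ : ℝ) ^ N) := by
  rw [← iUnion_vnkCell, mem_iUnion] at hx
  obtain ⟨m, hm⟩ := hx
  have hmN : m < N := antitone_two_inv_pow.reflect_lt (hN.trans_lt (vnk_mapsTo_vnkCell m hm).2)
  obtain ⟨d, rfl⟩ := Nat.exists_eq_add_of_lt hmN
  refine AddSubgroup.mem_zmultiples_iff.2 ⟨3 * 2 ^ d - 2 ^ (m + d + 1), ?_⟩
  rw [vnk_eqOn_vnkCell m hm, zsmul_eq_mul, inv_pow, inv_pow]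
  push_cast
  field_simp
  ring

end VonNeumannKakutani

section IntervalExchange

/-- The interval `[i/q, (i+1)/q)`. The index ranges over `ℕ` rather than `Fin q`, so that endpoints
form a monotone sequence. -/
def rotCell (q i : ℕ) : Set ℝ :=
  Ico ((i : ℝ) / q) (((i : ℝ) + 1) / q)

lemma pairwise_disjoint_rotCell (q : ℕ) : Pairwise (Disjoint on rotCell q) := by
  have hmono : Monotone fun i : ℕ ↦ (i : ℝ) / q := fun i j hij ↦
    div_le_div_of_nonneg_right (Nat.cast_le.2 hij) q.cast_nonneg
  simpa only [Order.succ_eq_add_one, Nat.cast_add_one] using! hmono.pairwise_disjoint_on_Ico_succ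

lemma pairwise_disjoint_rotCell_fin (q : ℕ) : Pairwise (Disjoint on fun i : Fin q ↦ rotCell q i) :=
  (pairwise_disjoint_rotCell q).comp_of_injective Fin.val_injective

lemma iUnion_rotCell (q : ℕ) [NeZero q] : ⋃ i : Fin q, rotCell q i = Ico 0 1 := by
  have hq : (0 : ℝ) < q := Nat.cast_pos.2 (NeZero.pos q)
  ext x
  rw [mem_iUnion]
  constructor
  · rintro ⟨i, hle, hlt⟩
    have hi : ((i : ℕ) : ℝ) + 1 ≤ q := mod_cast i.isLt
    exact ⟨le_trans (by positivity) hle, hlt.trans_le ((div_le_one hq).2 hi)⟩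
  · rintro ⟨h0, h1⟩
    have hnonneg : 0 ≤ x * q := mul_nonneg h0 hq.le
    have hfloor : ⌊x * q⌋₊ < q := (Nat.floor_lt hnonneg).2 (mul_lt_of_lt_one_left hq h1)
    exact ⟨⟨⌊x * q⌋₊, hfloor⟩, (div_le_iff₀ hq).2 (Nat.floor_le hnonneg),
      (lt_div_iff₀ hq).2 (Nat.lt_floor_add_one _)⟩

variable {q : ℕ} (π : Equiv.Perm (Fin q))

lemma rotPerm_eqOn_rotCell (i : Fin q) :
    EqOn (rotPerm q π) (· + (((π i : ℕ) : ℝ) - (i : ℕ)) / q) (rotCell q i) := by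
  intro x hx
  have hex : ∃ j : Fin q, x ∈ rotCell q j := ⟨i, hx⟩
  have hchoose : hex.choose = i :=
    (pairwise_disjoint_rotCell_fin q).eq (not_disjoint_iff.2 ⟨x, hex.choose_spec, hx⟩)
  calc rotPerm q π x = x + (((π hex.choose : ℕ) : ℝ) - (hex.choose : ℕ)) / q := dif_pos hex
    _ = x + (((π i : ℕ) : ℝ) - (i : ℕ)) / q := by rw [hchoose]

lemma rotPerm_mapsTo_rotCell (i : Fin q) :
    MapsTo (rotPerm q π) (rotCell q i) (rotCell q (π i)) := by
  have hmaps := mapsTo_Ico_of_eqOn_add_const (rotPerm_eqOn_rotCell π i)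
  have hleft : ((i : ℕ) : ℝ) / q + (((π i : ℕ) : ℝ) - (i : ℕ)) / q = (π i : ℕ) / q := by ring
  have hright : (((i : ℕ) : ℝ) + 1) / q + (((π i : ℕ) : ℝ) - (i : ℕ)) / q =
      ((π i : ℕ) + 1) / q := by ring
  rwa [hleft, hright] at hmaps

lemma rotPerm_sub_self_mem_zmultiples (x : ℝ) :
    rotPerm q π x - x ∈ AddSubgroup.zmultiples (q⁻¹ : ℝ) := by
  by_cases hx : ∃ i : Fin q, x ∈ rotCell q i
  · obtain ⟨i, hi⟩ := hx
    refine AddSubgroup.mem_zmultiples_iff.2 ⟨(π i : ℕ) - (i : ℕ), ?_⟩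
    rw [rotPerm_eqOn_rotCell π i hi, add_sub_cancel_left, zsmul_eq_mul, div_eq_mul_inv]
    push_cast
    rfl
  · have hfix : rotPerm q π x = x := dif_neg hx
    rw [hfix, sub_self]
    exact zero_mem _

variable [NeZero q]

lemma rotPerm_mapsTo : MapsTo (rotPerm q π) (Ico 0 1) (Ico 0 1) := by
  rw [← iUnion_rotCell q]
  exact mapsTo_iUnion.2 fun i ↦ (rotPerm_mapsTo_rotCell π i).mono_right
    (subset_iUnion (fun j : Fin q ↦ rotCell q j) (π i))

lemma rotPerm_injOn : InjOn (rotPerm q π) (Ico 0 1) := by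
  rw [← iUnion_rotCell q]
  exact injOn_iUnion_of_pairwise_disjoint
    (fun i ↦ injOn_of_eqOn_add_const (rotPerm_eqOn_rotCell π i)) (rotPerm_mapsTo_rotCell π)
    ((pairwise_disjoint_rotCell_fin q).comp_of_injective π.injective)

lemma rotPerm_tendsto_nhdsGE {x : ℝ} (hx : x ∈ Ico 0 1) :
    Tendsto (rotPerm q π) (𝓝[≥] x) (𝓝[≥] (rotPerm q π x)) := by
  rw [← iUnion_rotCell q, mem_iUnion] at hx
  obtain ⟨i, hi⟩ := hx
  exact tendsto_nhdsGE_of_eqOn_add_const (rotPerm_eqOn_rotCell π i) hi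

end IntervalExchange

section RotatedOdometer

variable {q : ℕ} [NeZero q] (π : Equiv.Perm (Fin q)) {x : ℝ}

lemma rotOdo_mapsTo_Ioo : MapsTo (rotOdo q π) (Ico 0 1) (Ioo 0 1) :=
  vnk_mapsTo.comp (rotPerm_mapsTo π)

lemma rotOdo_mapsTo : MapsTo (rotOdo q π) (Ico 0 1) (Ico 0 1) :=
  (rotOdo_mapsTo_Ioo π).mono_right Ioo_subset_Ico_self

lemma rotOdo_injOn : InjOn (rotOdo q π) (Ico 0 1) :=
  vnk_injOn.comp (rotPerm_injOn π) (rotPerm_mapsTo π)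

lemma rotOdo_tendsto_nhdsGE (hx : x ∈ Ico 0 1) :
    Tendsto (rotOdo q π) (𝓝[≥] x) (𝓝[≥] (rotOdo q π x)) :=
  (vnk_tendsto_nhdsGE (rotPerm_mapsTo π hx)).comp (rotPerm_tendsto_nhdsGE π hx)

lemma zero_notMem_periodicPts_rotOdo : (0 : ℝ) ∉ periodicPts (rotOdo q π) := fun hper ↦
  lt_irrefl 0 (mem_of_mem_periodicPts (rotOdo_mapsTo_Ioo π) Ioo_subset_Ico_self
    (left_mem_Ico.2 one_pos) hper).1

lemma rotOdo_sub_self_mem_zmultiples (hx : x ∈ Ico 0 1) {N : ℕ} (hN : 2⁻¹ ^ N ≤ rotOdo q π x) :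
    rotOdo q π x - x ∈ AddSubgroup.zmultiples ((q : ℝ)⁻¹ * 2⁻¹ ^ N) := by
  have hvnk : AddSubgroup.zmultiples ((2⁻¹ : ℝ) ^ N) ≤
      AddSubgroup.zmultiples ((q : ℝ)⁻¹ * 2⁻¹ ^ N) :=
    AddSubgroup.zmultiples_le_of_mem ⟨q, by simp [NeZero.ne]⟩
  have hrot : AddSubgroup.zmultiples (q⁻¹ : ℝ) ≤ AddSubgroup.zmultiples ((q : ℝ)⁻¹ * 2⁻¹ ^ N) :=
    AddSubgroup.zmultiples_le_of_mem ⟨2 ^ N, by simp [mul_left_comm]⟩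
  rw [← sub_add_sub_cancel _ (rotPerm q π x)]
  exact add_mem (hvnk (vnk_sub_self_mem_zmultiples (rotPerm_mapsTo π hx) hN))
    (hrot (rotPerm_sub_self_mem_zmultiples π x))

lemma mem_periodicPts_rotOdo_of_forall_le (hx : x ∈ Ico 0 1) {ε : ℝ} (hε : 0 < ε)
    (hle : ∀ y ∈ forwardOrbit (rotOdo q π) x, ε ≤ y) : x ∈ periodicPts (rotOdo q π) := by
  obtain ⟨N, hN⟩ := exists_pow_lt_of_lt_one hε (show (2⁻¹ : ℝ) < 1 by norm_num)
  have hsub : forwardOrbit (rotOdo q π) x ⊆ Ico 0 1 := forwardOrbit_subset (rotOdo_mapsTo π) hx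
  refine mem_periodicPts_of_finite_forwardOrbit (rotOdo_injOn π) (rotOdo_mapsTo π) hx ?_
  refine finite_forwardOrbit_of_sub_mem (AddSubgroup.zmultiples ((q : ℝ)⁻¹ * 2⁻¹ ^ N))
    ((Metric.isBounded_Ico 0 1).subset hsub) fun y hy ↦ ?_
  exact rotOdo_sub_self_mem_zmultiples π (hsub hy) (hN.le.trans (hle _ (mapsTo_forwardOrbit hy)))

lemma zero_mem_closure_forwardOrbit_rotOdo (hx : x ∈ Ico 0 1)
    (hper : x ∉ periodicPts (rotOdo q π)) : 0 ∈ closure (forwardOrbit (rotOdo q π) x) := by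
  refine Metric.mem_closure_iff.2 fun ε hε ↦ ?_
  by_contra! hfar
  refine hper (mem_periodicPts_rotOdo_of_forall_le π hx hε fun y hy ↦ ?_)
  have hy0 : 0 ≤ y := (forwardOrbit_subset (rotOdo_mapsTo π) hx hy).1
  simpa only [dist_zero_left, Real.norm_of_nonneg hy0] using hfar y hy

lemma rotOdo_iterate_continuousWithinAt_Ici (hx : x ∈ Ico 0 1) (n : ℕ) :
    ContinuousWithinAt (rotOdo q π)^[n] (Ici x) x :=
  (tendsto_iterate_nhdsGE (fun _ ↦ rotOdo_tendsto_nhdsGE π) (rotOdo_mapsTo π) hx n).mono_right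
    nhdsWithin_le_nhds

end RotatedOdometer

/-- `0` is not periodic for `F_π`, and for every non-periodic `x ∈ [0,1)` the
closure (in `[0,1)`) of the forward orbit of `0` is contained in the closure (in `[0,1)`) of
the forward orbit of `x`: the aperiodic subsystem has a unique minimal subsystem containing `0`. -/
theorem rotOdo_unique_minimal_set (q : ℕ) (hq : 2 ≤ q) (π : Equiv.Perm (Fin q)) :
    (¬ ∃ n : ℕ, 1 ≤ n ∧ (rotOdo q π)^[n] (0 : ℝ) = 0) ∧
    ∀ x ∈ Set.Ico (0 : ℝ) 1, (¬ ∃ n : ℕ, 1 ≤ n ∧ (rotOdo q π)^[n] x = x) →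
      closure {y : ℝ | ∃ n : ℕ, y = (rotOdo q π)^[n] (0 : ℝ)} ∩ Set.Ico (0 : ℝ) 1 ⊆
        closure {y : ℝ | ∃ n : ℕ, y = (rotOdo q π)^[n] x} ∩ Set.Ico (0 : ℝ) 1 := by
  have : NeZero q := ⟨by omega⟩
  refine ⟨zero_notMem_periodicPts_rotOdo π, fun x hx hper ↦ inter_subset_inter_left _ ?_⟩
  have horbit : forwardOrbit (rotOdo q π) x ⊆ Ici 0 :=
    (forwardOrbit_subset (rotOdo_mapsTo π) hx).trans Ico_subset_Ici_self
  exact closure_forwardOrbit_subset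
    (rotOdo_iterate_continuousWithinAt_Ici π (left_mem_Ico.2 one_pos)) horbit
    (zero_mem_closure_forwardOrbit_rotOdo π hx hper)
end

section
/- Let q ≥ 2 and π be a permutation of {0,…,q−1}. If x ∈ [0,1) is a periodic point of the rotated odometer F_π with F_π^n(x) = x for some n ≥ 1, then there exists ε > 0 such that every y ∈ [x, x+ε) ∩ [0,1) satisfies F_π^n(y) = y. In particular, the set I_per of periodic points is a union of half-open intervals of the form [u,v). -/
/-!
Every branch of the odometer and of the interval exchange is a translation on an interval that is
closed on the left and open on the right, so immediately to the right of a point of `[0, 1)` each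
map has constant displacement. This property is stable under composition, because such a map sends
right neighbourhoods to right neighbourhoods. So immediately to the right of a point of period `n`
the `n`-th iterate is a translation; it fixes the point itself, hence it is the identity there.
-/

open Filter Set Topology

section RightNeighborhoods

variable {α : Type*} [LinearOrder α] [TopologicalSpace α] [ClosedIciTopology α]

theorem eventually_nhdsGE_lt_iff_lt (x b : α) : ∀ᶠ y in 𝓝[≥] x, (y < b ↔ x < b) := by
  by_cases hxb : x < b
  · filter_upwards [mem_nhdsWithin_of_mem_nhds (Iio_mem_nhds hxb)] with y hyb
    exact iff_of_true hyb hxb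
  · filter_upwards [self_mem_nhdsWithin] with y hxy
    exact iff_of_false (fun hyb ↦ hxb (lt_of_le_of_lt hxy hyb)) hxb

theorem eventually_nhdsGE_mem_Ico_iff_mem_Ico (x a b : α) :
    ∀ᶠ y in 𝓝[≥] x, (y ∈ Ico a b ↔ x ∈ Ico a b) := by
  filter_upwards [eventually_nhdsGE_lt_iff_lt x a, eventually_nhdsGE_lt_iff_lt x b] with y ha hb
  simp only [mem_Ico, ← not_lt, ha, hb]

theorem eventually_nhdsGE_forall_lt_iff_lt_of_monotone {ι : Type*} [LinearOrder ι]
    [WellFoundedLT ι] {c : ι → α} (hc : Monotone c) (x : α) :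
    ∀ᶠ y in 𝓝[≥] x, ∀ i, (y < c i ↔ x < c i) := by
  by_cases hx : ∃ i, x < c i
  · obtain ⟨m, hxm, hmin⟩ := wellFounded_lt.has_min {i | x < c i} hx
    filter_upwards [eventually_nhdsGE_lt_iff_lt x (c m), self_mem_nhdsWithin] with y hym hxy i
    refine ⟨lt_of_le_of_lt hxy, fun hxi ↦ ?_⟩
    exact (hym.2 hxm).trans_le (hc (not_lt.1 (hmin i hxi)))
  · filter_upwards [self_mem_nhdsWithin] with y hxy i
    exact ⟨lt_of_le_of_lt hxy, fun hxi ↦ (hx ⟨i, hxi⟩).elim⟩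

end RightNeighborhoods

section RightTranslations

variable {G : Type*} [AddGroup G] [Preorder G] [TopologicalSpace G]

/-- `f` is a translation on a right neighbourhood of `x`, the point `x` included. This is the local
form of the maps whose branches are translations of half-open intervals `[u, v)`. -/
def IsRightTranslationAt (f : G → G) (x : G) : Prop :=
  ∀ᶠ y in 𝓝[≥] x, f y = y - x + f x

namespace IsRightTranslationAt

variable {f g : G → G} {x : G}

protected theorem id : IsRightTranslationAt id x :=
  Eventually.of_forall fun y ↦ (sub_add_cancel y x).symm

theorem eventually_eq_self (hf : IsRightTranslationAt f x) (hx : f x = x) :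
    ∀ᶠ y in 𝓝[≥] x, f y = y :=
  hf.mono fun y hy ↦ by rw [hy, hx, sub_add_cancel]

variable [AddRightMono G] [ContinuousAdd G]

theorem tendsto_nhdsGE (hf : IsRightTranslationAt f x) : Tendsto f (𝓝[≥] x) (𝓝[≥] f x) := by
  refine Tendsto.congr' (EventuallyEq.symm hf) (tendsto_nhdsWithin_iff.2 ⟨?_, ?_⟩)
  · have hcont : Continuous fun y ↦ y - x + f x := by
      simp only [sub_eq_add_neg]
      fun_prop
    exact (hcont.tendsto' x (f x) (by simp)).mono_left nhdsWithin_le_nhds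
  · filter_upwards [self_mem_nhdsWithin] with y hxy
    exact le_add_of_nonneg_left (sub_nonneg.2 hxy)

theorem comp (hg : IsRightTranslationAt g (f x)) (hf : IsRightTranslationAt f x) :
    IsRightTranslationAt (g ∘ f) x := by
  filter_upwards [hf, hf.tendsto_nhdsGE.eventually hg] with y hfy hgy
  rw [Function.comp_apply, hgy, hfy, add_sub_cancel_right, Function.comp_apply]

theorem iterate {s : Set G} (hmaps : MapsTo f s s) (hf : ∀ z ∈ s, IsRightTranslationAt f z)
    (hx : x ∈ s) (n : ℕ) : IsRightTranslationAt f^[n] x := by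
  induction n with
  | zero => exact .id
  | succ n ih =>
    rw [Function.iterate_succ']
    exact (hf _ (hmaps.iterate n hx)).comp ih

end IsRightTranslationAt

end RightTranslations

theorem exists_lt_one_sub_inv_two_pow {x : ℝ} (hx : x < 1) : ∃ n : ℕ, x < 1 - (2 : ℝ)⁻¹ ^ n := by
  obtain ⟨n, hn⟩ := exists_pow_lt_of_lt_one (sub_pos.2 hx) (two_inv_lt_one (α := ℝ))
  exact ⟨n, lt_sub_comm.1 hn⟩

theorem monotone_one_sub_inv_two_pow : Monotone fun n : ℕ ↦ 1 - (2 : ℝ)⁻¹ ^ n :=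
  fun _ _ hmn ↦ sub_le_sub_left (pow_le_pow_of_le_one (by norm_num) (by norm_num) hmn) 1

theorem isRightTranslationAt_vnk {x : ℝ} (hx : x < 1) : IsRightTranslationAt vnk x := by
  classical
  filter_upwards [eventually_nhdsGE_forall_lt_iff_lt_of_monotone
    monotone_one_sub_inv_two_pow x] with y hy
  have hx_ex := exists_lt_one_sub_inv_two_pow hx
  have hy_ex := (exists_congr hy).2 hx_ex
  have hfind : Nat.find hy_ex = Nat.find hx_ex := Nat.find_congr' (hy _)
  rw [vnk, vnk, dif_pos hx_ex, dif_pos hy_ex, hfind]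
  ring

theorem exists_mem_Ico_and_vnk_eq {x : ℝ} (hx : x ∈ Ico (0 : ℝ) 1) :
    ∃ k : ℕ, x ∈ Ico (1 - (2 : ℝ)⁻¹ ^ k) (1 - (2 : ℝ)⁻¹ ^ (k + 1)) ∧
      vnk x = x - 1 + 3 * (2 : ℝ)⁻¹ ^ (k + 1) := by
  classical
  have hex := exists_lt_one_sub_inv_two_pow hx.2
  have hpos : Nat.find hex ≠ 0 := fun hzero ↦ by
    have hlt := Nat.find_spec hex
    rw [hzero, pow_zero, sub_self] at hlt
    exact hlt.not_ge hx.1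
  obtain ⟨k, hk⟩ := Nat.exists_eq_succ_of_ne_zero hpos
  refine ⟨k, ⟨not_lt.1 (Nat.find_min hex (by omega)), ?_⟩, ?_⟩
  · rw [← Nat.succ_eq_add_one, ← hk]
    exact Nat.find_spec hex
  · rw [vnk, dif_pos hex, ← Nat.succ_eq_add_one, ← hk]

theorem mapsTo_vnk_Ico : MapsTo vnk (Ico 0 1) (Ico 0 1) := by
  intro x hx
  obtain ⟨k, ⟨hle, hlt⟩, hvnk⟩ := exists_mem_Ico_and_vnk_eq hx
  have hpow_pos : (0 : ℝ) < 2⁻¹ ^ k := by positivity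
  have hpow_le : (2 : ℝ)⁻¹ ^ k ≤ 1 := pow_le_one₀ (by norm_num) (by norm_num)
  rw [pow_succ] at hlt hvnk
  rw [hvnk, mem_Ico]
  constructor <;> linarith

theorem isRightTranslationAt_rotPerm (q : ℕ) (π : Equiv.Perm (Fin q)) (x : ℝ) :
    IsRightTranslationAt (rotPerm q π) x := by
  have hpieces : ∀ᶠ y in 𝓝[≥] x, ∀ i : Fin q,
      (y ∈ Ico ((i : ℝ) / q) (((i : ℝ) + 1) / q) ↔ x ∈ Ico ((i : ℝ) / q) (((i : ℝ) + 1) / q)) :=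
    eventually_all.2 fun _ ↦ eventually_nhdsGE_mem_Ico_iff_mem_Ico _ _ _
  filter_upwards [hpieces] with y hy
  -- The chosen index depends only on the set of pieces containing the point, so it is constant.
  simp only [rotPerm, hy]
  split_ifs <;> ring

theorem Ico_div_subset_Ico_zero_one {q : ℕ} (i : Fin q) :
    Ico ((i : ℝ) / q) (((i : ℝ) + 1) / q) ⊆ Ico 0 1 := by
  refine Ico_subset_Ico (by positivity) (div_le_one_of_le₀ ?_ q.cast_nonneg)
  exact_mod_cast i.isLt

theorem mapsTo_rotPerm_Ico (q : ℕ) (π : Equiv.Perm (Fin q)) :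
    MapsTo (rotPerm q π) (Ico 0 1) (Ico 0 1) := by
  intro x hx
  by_cases hpiece : ∃ i : Fin q, x ∈ Ico ((i : ℝ) / q) (((i : ℝ) + 1) / q)
  · rw [rotPerm, dif_pos hpiece]
    obtain ⟨hle, hlt⟩ := hpiece.choose_spec
    apply Ico_div_subset_Ico_zero_one (π hpiece.choose)
    rw [add_div] at hlt
    rw [sub_div, mem_Ico, add_div]
    constructor <;> linarith
  · rwa [rotPerm, dif_neg hpiece]

theorem isRightTranslationAt_rotOdo (q : ℕ) (π : Equiv.Perm (Fin q)) {x : ℝ}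
    (hx : x ∈ Ico (0 : ℝ) 1) : IsRightTranslationAt (rotOdo q π) x :=
  (isRightTranslationAt_vnk (mapsTo_rotPerm_Ico q π hx).2).comp (isRightTranslationAt_rotPerm q π x)

theorem mapsTo_rotOdo_Ico (q : ℕ) (π : Equiv.Perm (Fin q)) :
    MapsTo (rotOdo q π) (Ico 0 1) (Ico 0 1) :=
  mapsTo_vnk_Ico.comp (mapsTo_rotPerm_Ico q π)

/-- around each periodic point of `F_π` there is a right half-open interval of
points periodic with the same period; hence `I_per` is a union of half-open intervals `[u,v)`. -/
theorem rotOdo_periodic_point_has_halfopen_interval (q : ℕ) (hq : 2 ≤ q)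
    (π : Equiv.Perm (Fin q)) (x : ℝ) (hx : x ∈ Set.Ico (0 : ℝ) 1) (n : ℕ) (hn : 1 ≤ n)
    (hper : (rotOdo q π)^[n] x = x) :
    ∃ ε : ℝ, 0 < ε ∧
      ∀ y ∈ Set.Ico x (x + ε) ∩ Set.Ico (0 : ℝ) 1, (rotOdo q π)^[n] y = y := by
  have hiter : IsRightTranslationAt (rotOdo q π)^[n] x :=
    .iterate (mapsTo_rotOdo_Ico q π) (fun _ ↦ isRightTranslationAt_rotOdo q π) hx n
  obtain ⟨u, hxu, hu⟩ := mem_nhdsGE_iff_exists_Ico_subset.1 (hiter.eventually_eq_self hper)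
  refine ⟨u - x, sub_pos.2 hxu, fun y hy ↦ hu ?_⟩
  simpa only [add_sub_cancel] using hy.1
end
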